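/- In the ring of integers R of K = ℚ(√−2, √−7), every unit is congruent to 1 modulo 2R. -/

import Mathlib

open NumberField

/-!
Let `a ^ 2 = m` and `b ^ 2 = n` with `m ≡ 6` and `n ≡ 1` modulo `8`, both negative and squarefree,
and let `σ`, `τ` be the automorphisms of `K` negating only `a` and only `b`. For a unit `u`, the
relative norms `u * σ u` and `u * τ u` are units of the imaginary quadratic fields `ℚ(b)` and
`ℚ(a)`, hence `±1`. So `σ u = ± τ u`, which leaves only the shapes `u = p + s * (a * b)` and
`u = r * b + q * a`. After rescaling `a * b`, both read `u = x * c + y * d` with `c ^ 2 ≡ 1` and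
`d ^ 2 ≡ 6` modulo `8` squarefree, so `2 * x` and `2 * y` are integers, and the norm equation
`c ^ 2 * x ^ 2 - d ^ 2 * y ^ 2 = ±1` read modulo `8` forces `x` to be an odd and `y` an even
integer. Then `u - 1` is twice an integral combination of `c`, `d` and `(c - 1) / 2`, and the
latter is integral because `c ^ 2 ≡ 1` modulo `4`.
-/

open IntermediateField Module

section QuadraticExtension

variable {F K : Type*} [Field F] [Field K] [Algebra F K] {a b : K} {m n : F}

theorem notMem_range_algebraMap_of_sq_eq (ha : a ^ 2 = algebraMap F K m) (hm : ¬IsSquare m) :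
    a ∉ Set.range (algebraMap F K) := by
  rintro ⟨x, rfl⟩
  rw [← map_pow] at ha
  exact hm ⟨x, by rw [← sq, (algebraMap F K).injective ha]⟩

theorem exists_algEquiv_apply_eq_neg [IsGalois F K] (ha : a ^ 2 = algebraMap F K m)
    (ha' : a ∉ Set.range (algebraMap F K)) : ∃ σ : K ≃ₐ[F] K, σ a = -a := by
  rw [InfiniteGalois.mem_range_algebraMap_iff_fixed, not_forall] at ha'
  obtain ⟨σ, hσ⟩ := ha'
  have hsq : σ a ^ 2 = a ^ 2 := by rw [← map_pow, ha, σ.commutes]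
  exact ⟨σ, (sq_eq_sq_iff_eq_or_eq_neg.mp hsq).resolve_left hσ⟩

theorem exists_eq_add_mul_of_finrank_eq_two (hK : finrank F K = 2)
    (ha : a ∉ Set.range (algebraMap F K)) (x : K) :
    ∃ c d : F, x = algebraMap F K c + algebraMap F K d * a := by
  have hli : LinearIndependent F ![1, a] := by
    rw [LinearIndependent.pair_iff' one_ne_zero]
    exact fun c hc ↦ ha ⟨c, by rw [Algebra.algebraMap_eq_smul_one, hc]⟩
  have hspan := hli.span_eq_top_of_card_eq_finrank (by rw [Fintype.card_fin, hK])
  rw [Matrix.range_cons_cons_empty] at hspan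
  obtain ⟨c, d, h⟩ := Submodule.mem_span_pair.mp (hspan ▸ Submodule.mem_top : x ∈ _)
  exact ⟨c, d, by rw [← h, Algebra.smul_def, Algebra.smul_def, mul_one]⟩

theorem finrank_adjoin_simple_eq_two (hb : b ^ 2 = algebraMap F K n)
    (hb' : b ∉ Set.range (algebraMap F K)) : finrank F F⟮b⟯ = 2 := by
  have hint : IsIntegral F b := .of_pow two_pos (hb ▸ isIntegral_algebraMap)
  rw [adjoin.finrank hint]
  refine le_antisymm ?_ ((minpoly.two_le_natDegree_iff hint).mpr hb')
  rw [← Polynomial.natDegree_X_pow_sub_C (n := 2) (r := n)]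
  exact Polynomial.natDegree_le_natDegree <|
    minpoly.min F b (Polynomial.monic_X_pow_sub_C n two_ne_zero) (by simp [hb])

theorem exists_eq_add_mul_of_mem_adjoin_simple (hb : b ^ 2 = algebraMap F K n)
    (hb' : b ∉ Set.range (algebraMap F K)) (z : F⟮b⟯) :
    ∃ c d : F, (z : K) = algebraMap F K c + algebraMap F K d * b := by
  have hgen : AdjoinSimple.gen F b ∉ Set.range (algebraMap F F⟮b⟯) := by
    rintro ⟨c, hc⟩
    exact hb' ⟨c, congrArg (algebraMap F⟮b⟯ K) hc⟩
  obtain ⟨c, d, h⟩ :=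
    exists_eq_add_mul_of_finrank_eq_two (finrank_adjoin_simple_eq_two hb hb') hgen z
  exact ⟨c, d, congrArg (algebraMap F⟮b⟯ K) h⟩

end QuadraticExtension

section BiquadraticExtension

variable {F K : Type*} [Field F] [Field K] [Algebra F K] {a b : K} {m n : F}

theorem notMem_range_algebraMap_adjoin_simple [NeZero (2 : F)] (ha : a ^ 2 = algebraMap F K m)
    (hb : b ^ 2 = algebraMap F K n) (hm : ¬IsSquare m) (hn : ¬IsSquare n)
    (hmn : ¬IsSquare (m * n)) : a ∉ Set.range (algebraMap F⟮b⟯ K) := by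
  have hb' := notMem_range_algebraMap_of_sq_eq hb hn
  rintro ⟨z, hz⟩
  obtain ⟨c, d, hcd⟩ := exists_eq_add_mul_of_mem_adjoin_simple hb hb' z
  have ha_eq : a = algebraMap F K c + algebraMap F K d * b := hz ▸ hcd
  have hsq : algebraMap F K (2 * c * d) * b = algebraMap F K (m - c ^ 2 - n * d ^ 2) := by
    simp only [map_sub, map_mul, map_pow, map_ofNat]
    linear_combination ha - algebraMap F K d ^ 2 * hb -
      (a + algebraMap F K c + algebraMap F K d * b) * ha_eq
  have hcd0 : 2 * c * d = 0 := by
    by_contra h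
    refine hb' ⟨(m - c ^ 2 - n * d ^ 2) / (2 * c * d), ?_⟩
    rw [map_div₀, ← hsq, mul_div_cancel_left₀ _ ((map_ne_zero _).mpr h)]
  have hm_eq : m = c ^ 2 + n * d ^ 2 := by
    rw [hcd0, map_zero, zero_mul] at hsq
    linear_combination (map_eq_zero _).mp hsq.symm
  rcases mul_eq_zero.mp hcd0 with hc | rfl
  · obtain rfl := (mul_eq_zero.mp hc).resolve_left two_ne_zero
    exact hmn ⟨n * d, by rw [hm_eq]; ring⟩
  · exact hm ⟨c, by rw [hm_eq]; ring⟩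

theorem finrank_over_adjoin_simple_eq_two (hb : b ^ 2 = algebraMap F K n) (hn : ¬IsSquare n)
    (hK : finrank F K = 4) : finrank F⟮b⟯ K = 2 := by
  have hF := finrank_adjoin_simple_eq_two hb (notMem_range_algebraMap_of_sq_eq hb hn)
  have hmul := finrank_mul_finrank F F⟮b⟯ K
  rw [hF, hK] at hmul
  omega

theorem exists_algEquiv_neg_left [CharZero F] (ha : a ^ 2 = algebraMap F K m)
    (hb : b ^ 2 = algebraMap F K n) (hm : ¬IsSquare m) (hn : ¬IsSquare n)
    (hmn : ¬IsSquare (m * n)) (hK : finrank F K = 4) :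
    ∃ σ : K ≃ₐ[F] K, σ a = -a ∧ σ b = b := by
  have : Algebra.IsQuadraticExtension F⟮b⟯ K := ⟨finrank_over_adjoin_simple_eq_two hb hn hK⟩
  obtain ⟨σ, hσ⟩ := exists_algEquiv_apply_eq_neg (F := F⟮b⟯) (m := algebraMap F F⟮b⟯ m) ha
    (notMem_range_algebraMap_adjoin_simple ha hb hm hn hmn)
  exact ⟨σ.restrictScalars F, hσ, σ.commutes (AdjoinSimple.gen F b)⟩

theorem exists_biquadratic_coords [NeZero (2 : F)] (ha : a ^ 2 = algebraMap F K m)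
    (hb : b ^ 2 = algebraMap F K n) (hm : ¬IsSquare m) (hn : ¬IsSquare n)
    (hmn : ¬IsSquare (m * n)) (hK : finrank F K = 4) (x : K) :
    ∃ p q r s : F, x = algebraMap F K p + algebraMap F K q * a + algebraMap F K r * b +
      algebraMap F K s * (a * b) := by
  have hb' := notMem_range_algebraMap_of_sq_eq hb hn
  obtain ⟨c, d, rfl⟩ := exists_eq_add_mul_of_finrank_eq_two
    (finrank_over_adjoin_simple_eq_two hb hn hK)
    (notMem_range_algebraMap_adjoin_simple ha hb hm hn hmn) x
  obtain ⟨p, r, hc⟩ := exists_eq_add_mul_of_mem_adjoin_simple hb hb' c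
  obtain ⟨q, s, hd⟩ := exists_eq_add_mul_of_mem_adjoin_simple hb hb' d
  refine ⟨p, q, r, s, ?_⟩
  rw [IntermediateField.algebraMap_apply, IntermediateField.algebraMap_apply, hc, hd]
  ring

end BiquadraticExtension

section IntegerSquares

theorem exists_int_eq_of_squarefree_mul_sq {D k : ℤ} (hD : Squarefree D) {y : ℚ}
    (h : D * y ^ 2 = k) : ∃ j : ℤ, y = j := by
  have hD0 : (D : ℚ) ≠ 0 := by exact_mod_cast hD.ne_zero
  have hsq : (D * y) ^ 2 = ((D * k : ℤ) : ℚ) := by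
    push_cast
    linear_combination (D : ℚ) * h
  obtain ⟨l, hl⟩ := IsIntegrallyClosed.isIntegral_iff.mp
    (.of_pow two_pos (hsq ▸ isIntegral_algebraMap) : IsIntegral ℤ (D * y))
  rw [eq_intCast] at hl
  have hdvd : D ∣ l ^ 2 := ⟨k, by rw [← hl] at hsq; exact_mod_cast hsq⟩
  obtain ⟨j, rfl⟩ := (hD.dvd_pow_iff_dvd two_ne_zero).mp hdvd
  exact ⟨j, mul_left_cancel₀ hD0 (by rw [← hl, Int.cast_mul])⟩

theorem eq_zero_of_sq_sub_mul_sq_eq_four {D k l : ℤ} (hD : Squarefree D) (hD1 : D < -1)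
    (hD3 : D ≠ -3) (h : k ^ 2 - D * l ^ 2 = 4) : l = 0 := by
  by_contra hl
  have hl1 : 1 ≤ l ^ 2 := sq_pos_of_ne_zero hl
  have hD_ge : -4 ≤ D := by nlinarith [sq_nonneg k]
  have hD4 : D ≠ -4 := by
    rintro rfl
    exact absurd (hD 2 ⟨-1, by norm_num⟩) (by decide)
  obtain rfl : D = -2 := by omega
  have hk : |k| < 2 := abs_lt_of_sq_lt_sq (by linarith) zero_le_two
  have hl : |l| < 2 := abs_lt_of_sq_lt_sq (by linarith [sq_nonneg k]) zero_le_two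
  rw [abs_lt] at hk hl
  obtain ⟨_, _⟩ := hk
  obtain ⟨_, _⟩ := hl
  interval_cases k <;> interval_cases l <;> omega

theorem not_isSquare_of_zmod_eight_eq_six {k : ℤ} (hk : (k : ZMod 8) = 6) : ¬IsSquare k := by
  rintro ⟨j, rfl⟩
  rw [Int.cast_mul] at hk
  exact (by decide : ∀ j : ZMod 8, j * j ≠ 6) j hk

theorem exists_sq_mul_squarefree_of_zmod_eight_eq_six {k : ℤ} (hk : (k : ZMod 8) = 6) :
    ∃ g l : ℤ, g ^ 2 * l = k ∧ Squarefree l ∧ (l : ZMod 8) = 6 := by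
  obtain ⟨l, g, hgl, hl⟩ := Nat.sq_mul_squarefree k.natAbs
  have hk0 : k ≠ 0 := by
    rintro rfl
    exact absurd hk (by decide)
  have hgl' : (g : ℤ) ^ 2 * (k.sign * l) = k :=
    calc (g : ℤ) ^ 2 * (k.sign * l) = k.sign * (g ^ 2 * l : ℕ) := by push_cast; ring
      _ = k := by rw [hgl, Int.sign_mul_natAbs]
  refine ⟨g, k.sign * l, hgl', ?_, ?_⟩
  · rwa [← Int.squarefree_natAbs, Int.natAbs_mul, Int.natAbs_sign_of_ne_zero hk0, one_mul,
      Int.natAbs_natCast]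
  · rw [← hgl', Int.cast_mul, Int.cast_pow] at hk
    exact (by decide : ∀ g l : ZMod 8, g ^ 2 * l = 6 → l = 6) _ _ hk

theorem even_iff_four_mul_eq_zero_zmod_eight {k : ℤ} : Even k ↔ 4 * (k : ZMod 8) = 0 := by
  have h := ZMod.intCast_zmod_eq_zero_iff_dvd (4 * k) 8
  rw [Int.cast_mul, Int.cast_ofNat] at h
  rw [h]
  grind

theorem even_and_even_of_mul_sq_sub_mul_sq {A C k l e : ℤ} (hA : (A : ZMod 8) = 1)
    (hC : (C : ZMod 8) = 6) (he : IsUnit e) (h : A * k ^ 2 - C * l ^ 2 = 4 * e) :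
    Even k ∧ Even l := by
  have hmod : (k : ZMod 8) ^ 2 - 6 * l ^ 2 = 4 := by
    have hcast := congrArg (Int.cast : ℤ → ZMod 8) h
    push_cast [hA, hC] at hcast
    rw [one_mul] at hcast
    rcases Int.isUnit_iff.mp he with rfl | rfl <;> exact hcast
  rw [even_iff_four_mul_eq_zero_zmod_eight, even_iff_four_mul_eq_zero_zmod_eight]
  exact (by decide : ∀ k l : ZMod 8, k ^ 2 - 6 * l ^ 2 = 4 → 4 * k = 0 ∧ 4 * l = 0) k l hmod

theorem odd_and_even_of_mul_sq_sub_mul_sq {A C k l e : ℤ} (hA : (A : ZMod 8) = 1)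
    (hC : (C : ZMod 8) = 6) (he : IsUnit e) (h : A * k ^ 2 - C * l ^ 2 = e) :
    Odd k ∧ Even l := by
  have hmod : (k : ZMod 8) ^ 2 - 6 * l ^ 2 = 1 ∨ (k : ZMod 8) ^ 2 - 6 * l ^ 2 = -1 := by
    have hcast := congrArg (Int.cast : ℤ → ZMod 8) h
    push_cast [hA, hC] at hcast
    rw [one_mul] at hcast
    rcases Int.isUnit_iff.mp he with rfl | rfl
    exacts [.inl (by simpa using hcast), .inr (by simpa using hcast)]
  rw [← Int.not_even_iff_odd, even_iff_four_mul_eq_zero_zmod_eight,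
    even_iff_four_mul_eq_zero_zmod_eight]
  exact (by decide : ∀ k l : ZMod 8, k ^ 2 - 6 * l ^ 2 = 1 ∨ k ^ 2 - 6 * l ^ 2 = -1 →
    ¬4 * k = 0 ∧ 4 * l = 0) k l hmod

theorem exists_odd_and_even_of_two_mul_integral {A C e : ℤ} (hA : (A : ZMod 8) = 1)
    (hC : (C : ZMod 8) = 6) (he : IsUnit e) {x y : ℚ} (hx : ∃ k : ℤ, 2 * x = k)
    (hy : ∃ l : ℤ, 2 * y = l) (h : A * x ^ 2 - C * y ^ 2 = e) :
    ∃ k l : ℤ, x = 2 * k + 1 ∧ y = 2 * l := by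
  obtain ⟨k, hk⟩ := hx
  obtain ⟨l, hl⟩ := hy
  have hkl : A * k ^ 2 - C * l ^ 2 = 4 * e := by
    have hkl' : (A * k ^ 2 - C * l ^ 2 : ℚ) = 4 * e := by
      rw [← hk, ← hl]
      linear_combination 4 * h
    exact_mod_cast hkl'
  obtain ⟨⟨k, rfl⟩, l, rfl⟩ := even_and_even_of_mul_sq_sub_mul_sq hA hC he hkl
  obtain ⟨⟨k, rfl⟩, l, rfl⟩ :=
    odd_and_even_of_mul_sq_sub_mul_sq (k := k) (l := l) hA hC he (by linarith)
  push_cast at hk hl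
  exact ⟨k, l, by linarith, by linarith⟩

end IntegerSquares

section RingOfIntegers

variable {K : Type*} [Field K]

/-- The product `u * σ u`, as a unit of the ring of integers. If `σ` is an involution, this is the
relative norm of `u` over the fixed field of `σ`. -/
noncomputable def mulConj (σ : K →+* K) (u : (𝓞 K)ˣ) : (𝓞 K)ˣ :=
  u * Units.map (RingOfIntegers.mapRingHom σ : 𝓞 K →* 𝓞 K) u

theorem coe_mulConj (σ : K →+* K) (u : (𝓞 K)ˣ) :
    (mulConj σ u : K) = (u : K) * σ (u : K) := rfl

theorem map_eq_or_eq_neg_map {σ τ : K →+* K} {z : K} (hz : z ≠ 0) {e f : ℤ} (he : IsUnit e)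
    (hf : IsUnit f) (hσ : z * σ z = e) (hτ : z * τ z = f) : σ z = τ z ∨ σ z = -τ z := by
  rcases Int.isUnit_eq_or_eq_neg he hf with rfl | rfl
  · exact .inl (mul_left_cancel₀ hz (hσ.trans hτ.symm))
  · exact .inr (mul_left_cancel₀ hz (by rw [hσ, mul_neg, hτ, Int.cast_neg]))

theorem isIntegral_half_sub_one [NeZero (2 : K)] {c : K} {k : ℤ} (hc : c ^ 2 = 4 * k + 1) :
    IsIntegral ℤ ((c - 1) / 2) := by
  refine ⟨.X ^ 2 + .X - .C k, by monicity!, ?_⟩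
  have h : ((c - 1) / 2) ^ 2 + (c - 1) / 2 - (k : K) = 0 := by
    have := NeZero.ne (2 : K)
    field_simp
    linear_combination hc
  rwa [Polynomial.eval₂_sub, Polynomial.eval₂_add, Polynomial.eval₂_X_pow, Polynomial.eval₂_X,
    Polynomial.eval₂_C, eq_intCast]

variable [CharZero K]

theorem exists_int_eq_of_isIntegral_ratCast {q : ℚ} (h : IsIntegral ℤ (q : K)) :
    ∃ k : ℤ, q = k := by
  rw [← eq_ratCast (algebraMap ℚ K), isIntegral_algebraMap_iff (algebraMap ℚ K).injective] at h
  obtain ⟨k, hk⟩ := IsIntegrallyClosed.isIntegral_iff.mp h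
  exact ⟨k, hk.symm⟩

theorem exists_int_eq_of_isIntegral_mul_sqrt {D : ℤ} (hD : Squarefree D) {d : K}
    (hd : d ^ 2 = D) {y : ℚ} (h : IsIntegral ℤ (y * d)) : ∃ k : ℤ, y = k := by
  have hsq : (y * d) ^ 2 = ((D * y ^ 2 : ℚ) : K) := by
    push_cast
    rw [mul_pow, hd, mul_comm]
  obtain ⟨k, hk⟩ := exists_int_eq_of_isIntegral_ratCast (hsq ▸ h.pow 2)
  exact exists_int_eq_of_squarefree_mul_sq hD hk

theorem exists_isUnit_eq_of_coe_eq_ratCast {u : (𝓞 K)ˣ} {q : ℚ} (hu : (u : K) = q) :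
    ∃ e : ℤ, IsUnit e ∧ q = e := by
  have hinv : ((u⁻¹ : (𝓞 K)ˣ) : K) = (q⁻¹ : ℚ) := by
    rw [Rat.cast_inv, ← hu]
    exact eq_inv_of_mul_eq_one_left (by rw [← Units.coe_mul, inv_mul_cancel, Units.coe_one])
  obtain ⟨k, rfl⟩ := exists_int_eq_of_isIntegral_ratCast (hu ▸ RingOfIntegers.isIntegral_coe u.val)
  obtain ⟨l, hl⟩ :=
    exists_int_eq_of_isIntegral_ratCast (hinv ▸ RingOfIntegers.isIntegral_coe u⁻¹.val)
  have hk : (k : ℚ) ≠ 0 := by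
    intro hk
    exact Units.coe_ne_zero u (by rw [hu, hk, Rat.cast_zero])
  refine ⟨k, .of_mul_eq_one l ?_, rfl⟩
  have hkl : (k * l : ℚ) = 1 := by rw [← hl, mul_inv_cancel₀ hk]
  exact_mod_cast hkl

section Conjugation

variable {A C : ℤ} {c d : K} {σ : K →+* K} {x y : ℚ}

theorem map_mul_add_mul_eq_sub (hσc : σ c = c) (hσd : σ d = -d) :
    σ (x * c + y * d) = x * c - y * d := by
  rw [map_add, map_mul, map_mul, map_ratCast, map_ratCast, hσc, hσd, mul_neg, sub_eq_add_neg]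

theorem mul_map_mul_add_mul (hc : c ^ 2 = A) (hd : d ^ 2 = C) (hσc : σ c = c) (hσd : σ d = -d) :
    (x * c + y * d) * σ (x * c + y * d) = ((A * x ^ 2 - C * y ^ 2 : ℚ) : K) := by
  rw [map_mul_add_mul_eq_sub hσc hσd]
  push_cast
  linear_combination (x : K) ^ 2 * hc - (y : K) ^ 2 * hd

theorem exists_int_two_mul_coords_eq (hA : Squarefree A) (hC : Squarefree C) (hc : c ^ 2 = A)
    (hd : d ^ 2 = C) (hσc : σ c = c) (hσd : σ d = -d) (hint : IsIntegral ℤ (x * c + y * d)) :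
    (∃ k : ℤ, 2 * x = k) ∧ ∃ l : ℤ, 2 * y = l := by
  have hσint := map_isIntegral_int σ hint
  rw [map_mul_add_mul_eq_sub hσc hσd] at hσint
  have hx : x * c + y * d + (x * c - y * d) = (2 * x : ℚ) * c := by push_cast; ring
  have hy : x * c + y * d - (x * c - y * d) = (2 * y : ℚ) * d := by push_cast; ring
  exact ⟨exists_int_eq_of_isIntegral_mul_sqrt hA hc (hx ▸ hint.add hσint),
    exists_int_eq_of_isIntegral_mul_sqrt hC hd (hy ▸ hint.sub hσint)⟩

theorem exists_isUnit_coe_eq_of_coe_eq_add_mul_sqrt (hC : Squarefree C) (hC1 : C < -1)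
    (hC3 : C ≠ -3) (hd : d ^ 2 = C) (hσd : σ d = -d) {u : (𝓞 K)ˣ} (hu : (u : K) = x + y * d) :
    ∃ e : ℤ, IsUnit e ∧ (u : K) = e := by
  have hone : (1 : K) ^ 2 = (1 : ℤ) := by norm_num
  have hu1 : (u : K) = x * 1 + y * d := by rw [hu, mul_one]
  obtain ⟨⟨k, hk⟩, l, hl⟩ := exists_int_two_mul_coords_eq squarefree_one hC hone hd (map_one σ) hσd
    (hu1 ▸ RingOfIntegers.isIntegral_coe u.val)
  have hnorm : (mulConj σ u : K) = ((x ^ 2 - C * y ^ 2 : ℚ) : K) := by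
    rw [coe_mulConj, hu1, mul_map_mul_add_mul hone hd (map_one σ) hσd, Int.cast_one, one_mul]
  obtain ⟨e, he, hxy⟩ := exists_isUnit_eq_of_coe_eq_ratCast hnorm
  obtain rfl : e = 1 := by
    refine (Int.isUnit_iff.mp he).resolve_right ?_
    rintro rfl
    have hC0 : (C : ℚ) ≤ 0 := by exact_mod_cast (by omega : C ≤ 0)
    push_cast at hxy
    nlinarith [sq_nonneg x, mul_nonneg (neg_nonneg.mpr hC0) (sq_nonneg y)]
  have hkl : k ^ 2 - C * l ^ 2 = 4 := by
    have hkl' : (k ^ 2 - C * l ^ 2 : ℚ) = 4 := by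
      rw [← hk, ← hl]
      push_cast at hxy
      linear_combination 4 * hxy
    exact_mod_cast hkl'
  obtain rfl := eq_zero_of_sq_sub_mul_sq_eq_four hC hC1 hC3 hkl
  obtain rfl : y = 0 := by simpa using hl
  have hux : (u : K) = x := by rw [hu, Rat.cast_zero, zero_mul, add_zero]
  obtain ⟨e, he, rfl⟩ := exists_isUnit_eq_of_coe_eq_ratCast hux
  exact ⟨e, he, by rw [hux, Rat.cast_intCast]⟩

theorem exists_sub_one_eq_two_mul {e : ℤ} (hA : (A : ZMod 8) = 1) (hC : (C : ZMod 8) = 6)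
    (hA' : Squarefree A) (hC' : Squarefree C) (hc : c ^ 2 = A) (hd : d ^ 2 = C) (hσc : σ c = c)
    (hσd : σ d = -d) {u : K} (hu : u = x * c + y * d) (hint : IsIntegral ℤ u) (he : IsUnit e)
    (hnorm : u * σ u = e) : ∃ v : K, IsIntegral ℤ v ∧ u - 1 = 2 * v := by
  subst hu
  obtain ⟨hx, hy⟩ := exists_int_two_mul_coords_eq hA' hC' hc hd hσc hσd hint
  rw [mul_map_mul_add_mul hc hd hσc hσd] at hnorm
  obtain ⟨k, l, rfl, rfl⟩ :=
    exists_odd_and_even_of_two_mul_integral hA hC he hx hy (by exact_mod_cast hnorm)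
  obtain ⟨j, hj⟩ : ∃ j, A - 1 = 8 * j :=
    (ZMod.intCast_zmod_eq_zero_iff_dvd (A - 1) 8).mp (by push_cast; rw [hA, sub_self])
  have hhalf : IsIntegral ℤ ((c - 1) / 2) := by
    refine isIntegral_half_sub_one (k := 2 * j) ?_
    rw [hc, sub_eq_iff_eq_add.mp hj]
    push_cast
    ring
  have hcint : IsIntegral ℤ c := .of_pow two_pos (hc ▸ isIntegral_algebraMap)
  have hdint : IsIntegral ℤ d := .of_pow two_pos (hd ▸ isIntegral_algebraMap)
  have hcast (i : ℤ) : IsIntegral ℤ (i : K) := isIntegral_algebraMap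
  refine ⟨k * c + l * d + (c - 1) / 2,
    (((hcast k).mul hcint).add ((hcast l).mul hdint)).add hhalf, ?_⟩
  push_cast
  ring

end Conjugation

section Biquadratic

variable {m n : ℤ} {a b : K} {σ τ : K →+* K} {p q r s : ℚ}

theorem exists_mul_map_eq_add_mul (ha : a ^ 2 = m) (hb : b ^ 2 = n) (hτa : τ a = a)
    (hτb : τ b = -b) {z : K} (hz : z = p + q * a + r * b + s * (a * b)) :
    ∃ x y : ℚ, z * τ z = x + y * a := by
  refine ⟨p ^ 2 + m * q ^ 2 - n * r ^ 2 - m * n * s ^ 2, 2 * (p * q - n * r * s), ?_⟩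
  simp only [hz, map_add, map_mul, map_ratCast, hτa, hτb]
  push_cast
  linear_combination ((q : K) ^ 2 - n * s ^ 2) * ha - (r + s * a : K) ^ 2 * hb

theorem eq_add_mul_or_eq_mul_add_mul (hσa : σ a = -a) (hσb : σ b = b) (hτa : τ a = a)
    (hτb : τ b = -b) {z : K} (hz : z = p + q * a + r * b + s * (a * b))
    (h : σ z = τ z ∨ σ z = -τ z) : z = p + s * (a * b) ∨ z = r * b + q * a := by
  have hσz : σ z = p - q * a + r * b - s * (a * b) := by
    simp only [hz, map_add, map_mul, map_ratCast, hσa, hσb]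
    ring
  have hτz : τ z = p + q * a - r * b - s * (a * b) := by
    simp only [hz, map_add, map_mul, map_ratCast, hτa, hτb]
    ring
  rw [hσz, hτz] at h
  refine h.imp (fun h ↦ ?_) (fun h ↦ ?_)
  · have h0 : r * b - q * a = 0 := by linear_combination h / 2
    have hσ0 := congrArg σ h0
    simp only [map_sub, map_mul, map_ratCast, hσa, hσb, map_zero] at hσ0
    linear_combination hz + hσ0
  · have h0 : p - s * (a * b) = 0 := by linear_combination h / 2
    have hσ0 := congrArg σ h0
    simp only [map_sub, map_mul, map_ratCast, hσa, hσb, map_zero] at hσ0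
    linear_combination hz + hσ0

theorem exists_isUnit_mul_map_eq (hm : Squarefree m) (hm1 : m < -1) (hm3 : m ≠ -3)
    (ha : a ^ 2 = m) (hb : b ^ 2 = n) (hσa : σ a = -a) (hτa : τ a = a) (hτb : τ b = -b)
    {u : (𝓞 K)ˣ} (hu : (u : K) = p + q * a + r * b + s * (a * b)) :
    ∃ e : ℤ, IsUnit e ∧ (u : K) * τ u = e := by
  obtain ⟨x, y, hxy⟩ := exists_mul_map_eq_add_mul ha hb hτa hτb hu
  rw [← coe_mulConj] at hxy ⊢
  exact exists_isUnit_coe_eq_of_coe_eq_add_mul_sqrt hm hm1 hm3 ha hσa hxy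

theorem exists_div_sq_eq_squarefree {k : ℤ} (hk : (k : ZMod 8) = 6) {c : K} (hc : c ^ 2 = k) :
    ∃ g l : ℤ, (g : K) ≠ 0 ∧ (c / g) ^ 2 = l ∧ Squarefree l ∧ (l : ZMod 8) = 6 := by
  obtain ⟨g, l, rfl, hl, hl8⟩ := exists_sq_mul_squarefree_of_zmod_eight_eq_six hk
  have hg : (g : K) ≠ 0 := by
    rw [Int.cast_ne_zero]
    rintro rfl
    rw [zero_pow two_ne_zero, zero_mul] at hk
    exact absurd hk (by decide)
  refine ⟨g, l, hg, ?_, hl, hl8⟩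
  rw [div_pow, hc, Int.cast_mul, Int.cast_pow, mul_div_cancel_left₀ _ (pow_ne_zero 2 hg)]

theorem exists_coe_sub_one_eq_two_mul (hm : Squarefree m) (hn : Squarefree n) (hm0 : m < 0)
    (hn0 : n < 0) (hm8 : (m : ZMod 8) = 6) (hn8 : (n : ZMod 8) = 1) (ha : a ^ 2 = m)
    (hb : b ^ 2 = n) (hσa : σ a = -a) (hσb : σ b = b) (hτa : τ a = a) (hτb : τ b = -b)
    {u : (𝓞 K)ˣ} (hu : (u : K) = p + q * a + r * b + s * (a * b)) :
    ∃ v : K, IsIntegral ℤ v ∧ (u : K) - 1 = 2 * v := by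
  have ne_of_zmod {k l : ℤ} (h : (k : ZMod 8) ≠ l) : k ≠ l := fun hkl ↦ h (hkl ▸ rfl)
  have hm1 : m ≠ -1 := ne_of_zmod (by rw [hm8]; decide)
  have hm3 : m ≠ -3 := ne_of_zmod (by rw [hm8]; decide)
  have hn1 : n ≠ -1 := ne_of_zmod (by rw [hn8]; decide)
  have hn3 : n ≠ -3 := ne_of_zmod (by rw [hn8]; decide)
  obtain ⟨e, he, hσu⟩ := exists_isUnit_mul_map_eq (a := b) (b := a) (p := p) (q := r) (r := q)
    (s := s) hn (by omega) hn3 hb ha hτb hσb hσa (hu.trans (by ring))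
  obtain ⟨f, hf, hτu⟩ := exists_isUnit_mul_map_eq hm (by omega) hm3 ha hb hσa hτa hτb hu
  have hint := RingOfIntegers.isIntegral_coe u.val
  have hστ := map_eq_or_eq_neg_map (Units.coe_ne_zero u) he hf hσu hτu
  rcases eq_add_mul_or_eq_mul_add_mul hσa hσb hτa hτb hu hστ with hps | hrq
  · obtain ⟨g, l, hg, hdl, hl, hl8⟩ := exists_div_sq_eq_squarefree (k := m * n) (c := a * b)
      (by rw [Int.cast_mul, hm8, hn8, mul_one]) (by rw [mul_pow, ha, hb, Int.cast_mul])
    have hσd : σ (a * b / g) = -(a * b / g) := by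
      rw [map_div₀, map_mul, map_intCast, hσa, hσb, neg_mul, neg_div]
    have hu' : (u : K) = p * 1 + (s * g : ℚ) * (a * b / g) := by
      rw [hps, Rat.cast_mul, Rat.cast_intCast, mul_assoc (s : K), mul_div_cancel₀ _ hg, mul_one]
    exact exists_sub_one_eq_two_mul (A := 1) Int.cast_one hl8 squarefree_one hl (by norm_num) hdl
      (map_one σ) hσd hu' hint he hσu
  · exact exists_sub_one_eq_two_mul hn8 hm8 hn hm hb ha hσb hσa hrq hint he hσu

end Biquadratic

end RingOfIntegers

theorem units_congruent_one_mod_two_general {K : Type*} [Field K] [CharZero K] {m n : ℤ}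
    (hm : Squarefree m) (hn : Squarefree n) (hm0 : m < 0) (hn0 : n < 0)
    (hm8 : (m : ZMod 8) = 6) (hn8 : (n : ZMod 8) = 1) {a b : K} (ha : a ^ 2 = m) (hb : b ^ 2 = n)
    (hK : finrank ℚ K = 4) (u : (𝓞 K)ˣ) : ∃ v : 𝓞 K, (u : 𝓞 K) - 1 = 2 * v := by
  have ha' : a ^ 2 = algebraMap ℚ K m := by rw [ha, map_intCast]
  have hb' : b ^ 2 = algebraMap ℚ K n := by rw [hb, map_intCast]
  have hm' : ¬IsSquare (m : ℚ) := fun h ↦ hm0.not_ge (Int.cast_nonneg_iff.mp h.nonneg)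
  have hn' : ¬IsSquare (n : ℚ) := fun h ↦ hn0.not_ge (Int.cast_nonneg_iff.mp h.nonneg)
  have hmn' : ¬IsSquare (m * n : ℚ) := by
    rw [← Int.cast_mul, Rat.isSquare_intCast_iff]
    exact not_isSquare_of_zmod_eight_eq_six (by rw [Int.cast_mul, hm8, hn8, mul_one])
  obtain ⟨σ, hσa, hσb⟩ := exists_algEquiv_neg_left ha' hb' hm' hn' hmn' hK
  obtain ⟨τ, hτb, hτa⟩ := exists_algEquiv_neg_left hb' ha' hn' hm' (mul_comm (m : ℚ) n ▸ hmn') hK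
  obtain ⟨p, q, r, s, hu⟩ := exists_biquadratic_coords ha' hb' hm' hn' hmn' hK (u : K)
  simp only [eq_ratCast] at hu
  obtain ⟨v, hv, huv⟩ := exists_coe_sub_one_eq_two_mul (σ := (σ : K →+* K)) (τ := (τ : K →+* K))
    hm hn hm0 hn0 hm8 hn8 ha hb hσa hσb hτa hτb hu
  exact ⟨⟨v, hv⟩, RingOfIntegers.ext huv⟩

/-- In the ring of integers of `K = ℚ(√-2, √-7)`, every unit is
congruent to 1 modulo 2. -/
theorem units_congruent_one_mod_two
    {K : Type*} [Field K] [NumberField K]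
    (a b : K) (ha : a ^ 2 = -2) (hb : b ^ 2 = -7)
    (h4 : Module.finrank ℚ K = 4) :
    ∀ u : (𝓞 K)ˣ, ∃ v : 𝓞 K, (u : 𝓞 K) - 1 = 2 * v :=
  units_congruent_one_mod_two_general (m := -2) (n := -7)
    Int.prime_two.neg.squarefree (Int.prime_iff_natAbs_prime.mpr (by norm_num)).squarefree
    (by norm_num) (by norm_num) rfl rfl (by exact_mod_cast ha) (by exact_mod_cast hb) h4
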